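/- There exists a nonconstant periodic function φ ∈ C⁴(ℝ) that solves, on all of ℝ, the fourth-order equation φ⁗(s) + 18 φ‴(s) + 119 φ″(s) + 342 φ′(s) + 360 φ(s) = −sign(φ(s))·|φ(s)|^{1/3}, whose linear part factorizes as (D+3)(D+4)(D+5)(D+6) with D = d/ds. In particular, the oscillatory component governing the behaviour of compacton profiles of the cubic fifth-order NDE near their interfaces changes sign infinitely often. -/

import Mathlib

open Set Filter

set_option maxHeartbeats 1000000 in
open MeasureTheory BoundedContinuousFunction in
lemma fp_exists {Q S : Type} [TopologicalSpace Q] [TopologicalSpace S] [MeasurableSpace S]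
    [BorelSpace S] [FirstCountableTopology Q] [FirstCountableTopology S]
    [SecondCountableTopology S]
    (μ : Measure S) [IsFiniteMeasure μ] (k : Q × S → S → ℝ) (l : S → ℝ) (C : ℝ)
    (hk1 : ∀ s, Continuous (fun p => k p s)) (hk2 : ∀ p, Continuous (k p))
    (hl : Integrable l μ) (hl0 : ∀ s, 0 ≤ l s) (hlpos : 0 < ∫ s, l s ∂μ)
    (hlk : ∀ p s, l s ≤ k p s) (hC : ∀ p s, k p s ≤ C) :
    ∃ v : (Q × S) →ᵇ ℝ, ∀ p, Real.exp (v p) = ∫ s, k p s * Real.exp (v (p.1, s) / 3) ∂μ := by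
  have hk0 : ∀ p s, 0 ≤ k p s := fun p s => (hl0 s).trans (hlk p s)
  obtain ⟨N, hN⟩ : ∃ N : ((Q × S) →ᵇ ℝ) → Q × S → ℝ,
      ∀ v p, N v p = ∫ s, k p s * Real.exp (v (p.1, s) / 3) ∂μ := ⟨_, fun _ _ => rfl⟩
  have hvle : ∀ (v : (Q × S) →ᵇ ℝ) p, v p ≤ ‖v‖ := fun v p =>
    (le_abs_self _).trans (v.norm_coe_le_norm p)
  have hvge : ∀ (v : (Q × S) →ᵇ ℝ) p, -‖v‖ ≤ v p := fun v p =>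
    neg_le_of_abs_le (v.norm_coe_le_norm p)
  have hmeas : ∀ (v : (Q × S) →ᵇ ℝ) p,
      AEStronglyMeasurable (fun s => k p s * Real.exp (v (p.1, s) / 3)) μ := by
    intro v p
    have h1 := hk2 p
    have : Continuous (fun s => k p s * Real.exp (v (p.1, s) / 3)) := by fun_prop
    exact this.aestronglyMeasurable
  have hbd : ∀ (v : (Q × S) →ᵇ ℝ) p s,
      ‖k p s * Real.exp (v (p.1, s) / 3)‖ ≤ C * Real.exp (‖v‖ / 3) := by
    intro v p s
    rw [Real.norm_of_nonneg (mul_nonneg (hk0 p s) (Real.exp_pos _).le)]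
    apply mul_le_mul (hC p s) _ (Real.exp_pos _).le ((hk0 p s).trans (hC p s))
    apply Real.exp_le_exp.2
    linarith [hvle v (p.1, s)]
  have hint : ∀ (v : (Q × S) →ᵇ ℝ) p,
      Integrable (fun s => k p s * Real.exp (v (p.1, s) / 3)) μ := by
    intro v p
    exact Integrable.of_bound (hmeas v p) _ (Eventually.of_forall (hbd v p))
  have hNc : ∀ v, Continuous (N v) := by
    intro v
    have e : N v = fun p => ∫ s, k p s * Real.exp (v (p.1, s) / 3) ∂μ := funext (hN v)
    rw [e]
    refine continuous_of_dominated (bound := fun _ => C * Real.exp (‖v‖ / 3)) (hmeas v)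
      (fun p => Eventually.of_forall (hbd v p)) (integrable_const _) (Eventually.of_forall ?_)
    intro s
    have h1 := hk1 s
    fun_prop
  have hNlo : ∀ v p, Real.exp (-‖v‖ / 3) * ∫ s, l s ∂μ ≤ N v p := by
    intro v p
    rw [← integral_const_mul, hN]
    apply integral_mono (hl.const_mul _) (hint v p)
    intro s
    simp only
    rw [mul_comm]
    apply mul_le_mul (hlk p s) _ (Real.exp_pos _).le (hk0 p s)
    apply Real.exp_le_exp.2
    linarith [hvge v (p.1, s)]
  have hNpos : ∀ v p, 0 < N v p := fun v p =>
    lt_of_lt_of_le (mul_pos (Real.exp_pos _) hlpos) (hNlo v p)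
  have hNhi : ∀ v p, N v p ≤ μ.real univ * (C * Real.exp (‖v‖ / 3)) := by
    intro v p
    have := integral_mono (hint v p) (integrable_const (C * Real.exp (‖v‖ / 3)))
      (fun s => (le_abs_self _).trans (hbd v p s))
    rw [hN]
    simpa using this
  have hbdd : ∀ v, ∃ B, ∀ p, ‖Real.log (N v p)‖ ≤ B := by
    intro v
    refine ⟨max |Real.log (Real.exp (-‖v‖ / 3) * ∫ s, l s ∂μ)|
      |Real.log (μ.real univ * (C * Real.exp (‖v‖ / 3)))|, fun p => ?_⟩
    exact abs_le_max_abs_abs (Real.log_le_log (mul_pos (Real.exp_pos _) hlpos) (hNlo v p))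
      (Real.log_le_log (hNpos v p) (hNhi v p))
  have hL : ∀ v, ∃ L : (Q × S) →ᵇ ℝ, ∀ p, L p = Real.log (N v p) := by
    intro v
    obtain ⟨B, hB⟩ := hbdd v
    exact ⟨BoundedContinuousFunction.ofNormedAddCommGroup (fun p => Real.log (N v p))
      ((hNc v).log (fun p => (hNpos v p).ne')) B hB, fun p => rfl⟩
  choose Λ hΛ using hL
  have key : ∀ v w p, Λ v p ≤ Λ w p + dist v w / 3 := by
    intro v w p
    rw [hΛ, hΛ]
    have h : N v p ≤ Real.exp (dist v w / 3) * N w p := by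
      rw [hN, hN, ← integral_const_mul]
      apply integral_mono (hint v p) ((hint w p).const_mul _)
      intro s
      simp only
      rw [mul_left_comm, ← Real.exp_add]
      apply mul_le_mul_of_nonneg_left _ (hk0 p s)
      apply Real.exp_le_exp.2
      have h1 : |v (p.1, s) - w (p.1, s)| ≤ dist v w := by
        rw [← Real.dist_eq]; exact BoundedContinuousFunction.dist_coe_le_dist _
      linarith [le_abs_self (v (p.1, s) - w (p.1, s))]
    have h2 := Real.log_le_log (hNpos v p) h
    rw [Real.log_mul (Real.exp_pos _).ne' (hNpos w p).ne', Real.log_exp] at h2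
    linarith
  have hcontr : ContractingWith (1/3) Λ := by
    refine ⟨by rw [← NNReal.coe_lt_coe]; norm_num, ?_⟩
    apply LipschitzWith.of_dist_le_mul
    intro v w
    rw [BoundedContinuousFunction.dist_le (by positivity)]
    intro p
    rw [Real.dist_eq, abs_le]
    have h1 := key v w p
    have h2 := key w v p
    rw [dist_comm w v] at h2
    simp only [NNReal.coe_div, NNReal.coe_one, NNReal.coe_ofNat]
    constructor <;> linarith
  obtain ⟨v, hv⟩ : ∃ v, Λ v = v :=
    ⟨ContractingWith.fixedPoint Λ hcontr, hcontr.fixedPoint_isFixedPt⟩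
  refine ⟨v, fun p => ?_⟩
  have h2 : Λ v p = v p := by rw [hv]
  rw [hΛ] at h2
  rw [← hN, ← h2, Real.exp_log (hNpos _ p)]
noncomputable def al (q : ℝ) : ℝ := 1 / (1 + q ^ 4)
noncomputable def be (q : ℝ) : ℝ := 1 / (1 + q ^ 5)
noncomputable def dd (q : ℝ) : ℝ := (1 / 2 - al q) * (1 / 2 - be q) - 1 / 12
noncomputable def ka (q s : ℝ) : ℝ :=
  be q / 12 * (s * (1 - s)) * ((1 - s) * (1 - al q) + al q * s)
noncomputable def kb (q s : ℝ) : ℝ := al q * (s * (1 - s)) * ((2 - s) / 6 - be q / 2)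
noncomputable def kc (q s : ℝ) : ℝ := -6 * ka q s - 3 * kb q s + dd q * (1 - s) ^ 3
noncomputable def KK (q t s : ℝ) : ℝ :=
  ka q s * (t * (1 - t ^ 2)) + kb q s / 2 * (t ^ 2 * (1 - t))
    + dd q / 6 * (t ^ 3 * (1 - s) ^ 3 - (max (t - s) 0) ^ 3)
noncomputable def mm (q s : ℝ) : ℝ := (1 + q ^ 3) * kc q s - dd q

lemma al_pos {q : ℝ} : 0 < al q := by unfold al; positivity
lemma be_pos {q : ℝ} (hq : 1 ≤ q) : 0 < be q := by unfold be; positivity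
lemma al_le {q : ℝ} (hq : 1 ≤ q) : al q ≤ 1 / 2 := by
  unfold al
  have : 1 ≤ q ^ 4 := one_le_pow₀ hq
  apply one_div_le_one_div_of_le <;> linarith
lemma be_le {q : ℝ} (hq : 1 ≤ q) : be q ≤ 1 / 2 := by
  unfold be
  have : 1 ≤ q ^ 5 := one_le_pow₀ hq
  apply one_div_le_one_div_of_le <;> linarith
lemma q4_al {q : ℝ} : q ^ 4 * al q = 1 - al q := by
  unfold al
  have : (1 + q ^ 4) ≠ 0 := by positivity
  field_simp
  ring
lemma q5_be {q : ℝ} (hq : 1 ≤ q) : q ^ 5 * be q = 1 - be q := by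
  unfold be
  have : (1 + q ^ 5) ≠ 0 := by positivity
  field_simp
  ring

lemma dd_mono {p q : ℝ} (hp : 1 ≤ p) (hq : p ≤ q) : dd p ≤ dd q := by
  have h1 : al q ≤ al p := by
    unfold al
    apply one_div_le_one_div_of_le (by positivity)
    gcongr
  have h2 : be q ≤ be p := by
    unfold be
    apply one_div_le_one_div_of_le (by positivity)
    gcongr
  have h3 := al_le hp
  have h4 := be_le hp
  unfold dd
  nlinarith

lemma exists_q0 : ∃ q0 : ℝ, 1 ≤ q0 ∧ q0 ≤ 3 ∧ dd q0 = 0 := by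
  have hc : ContinuousOn dd (Icc 1 3) := by
    unfold dd al be
    have : ∀ x ∈ Icc (1:ℝ) 3, 1 + x ^ 4 ≠ 0 := fun x _ => by positivity
    have : ∀ x ∈ Icc (1:ℝ) 3, 1 + x ^ 5 ≠ 0 := fun x hx => by
      have : 0 ≤ x := by linarith [hx.1]
      positivity
    fun_prop (disch := assumption)
  have := intermediate_value_Icc (by norm_num : (1:ℝ) ≤ 3) hc
  have h0 : (0:ℝ) ∈ Icc (dd 1) (dd 3) := by
    constructor <;> (unfold dd al be; norm_num)
  obtain ⟨q, hq, h⟩ := this h0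
  exact ⟨q, hq.1, hq.2, h⟩

lemma be_third {q : ℝ} (hq : 1 ≤ q) (hd : 0 ≤ dd q) : be q ≤ 1 / 3 := by
  have h1 := al_le hq
  have h2 := al_pos (q := q)
  have h4 := be_le hq
  unfold dd at hd
  nlinarith

lemma ka_nonneg {q s : ℝ} (hq : 1 ≤ q) (h0 : 0 ≤ s) (h1 : s ≤ 1) : 0 ≤ ka q s := by
  have h2 := be_pos hq
  have h3 := al_le hq
  have h4 := al_pos (q := q)
  have : 0 ≤ 1 - s := by linarith
  have : 0 ≤ 1 - al q := by linarith
  unfold ka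
  positivity

lemma kb_nonneg {q s : ℝ} (hq : 1 ≤ q) (hd : 0 ≤ dd q) (h0 : 0 ≤ s) (h1 : s ≤ 1) :
    0 ≤ kb q s := by
  have h2 := be_third hq hd
  have h4 := al_pos (q := q)
  have : 0 ≤ 1 - s := by linarith
  have : 0 ≤ (2 - s) / 6 - be q / 2 := by linarith
  unfold kb
  positivity

/-- lower bound of `ka` uniform for `q ≤ 3` -/
lemma ka_lower {q s : ℝ} (hq : 1 ≤ q) (hq3 : q ≤ 3) (h0 : 0 ≤ s) (h1 : s ≤ 1) :
    1 / 10 ^ 6 * (s * (1 - s)) ≤ ka q s := by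
  have h2 : 1 / 244 ≤ be q := by
    unfold be
    apply one_div_le_one_div_of_le (by positivity)
    have : q ^ 5 ≤ 3 ^ 5 := by gcongr
    linarith
  have h3 : 1 / 82 ≤ al q := by
    unfold al
    apply one_div_le_one_div_of_le (by positivity)
    have : q ^ 4 ≤ 3 ^ 4 := by gcongr
    linarith
  have h4 := al_le hq
  have h5 : 1 / 82 ≤ (1 - s) * (1 - al q) + al q * s := by nlinarith
  have h6 : 0 ≤ s * (1 - s) := mul_nonneg h0 (by linarith)
  unfold ka
  have h7 : 1 / 244 * (1 / 82) ≤ be q * ((1 - s) * (1 - al q) + al q * s) := by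
    apply mul_le_mul h2 h5 (by norm_num) (by linarith)
  nlinarith

lemma ka_upper {q s : ℝ} (hq : 1 ≤ q) (h0 : 0 ≤ s) (h1 : s ≤ 1) : ka q s ≤ 1 := by
  have h2 := be_pos hq
  have h3 := be_le hq
  have h4 := al_le hq
  have h4' := al_pos (q := q)
  have h5 : (1 - s) * (1 - al q) + al q * s ≤ 1 := by nlinarith
  have h5' : 0 ≤ (1 - s) * (1 - al q) + al q * s := by
    have : 0 ≤ 1 - s := by linarith
    have : 0 ≤ 1 - al q := by linarith
    positivity
  have h6 : 0 ≤ s * (1 - s) := mul_nonneg h0 (by linarith)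
  have h7 : s * (1 - s) ≤ 1 := by nlinarith
  unfold ka
  calc _ ≤ (1 : ℝ) * 1 * 1 := by
        apply mul_le_mul _ h5 h5' (by norm_num)
        apply mul_le_mul _ h7 h6 (by norm_num)
        linarith
    _ = 1 := by norm_num

lemma kb_upper {q s : ℝ} (hq : 1 ≤ q) (hd : 0 ≤ dd q) (h0 : 0 ≤ s) (h1 : s ≤ 1) :
    kb q s ≤ 1 := by
  have h2 := be_pos hq
  have h3 := be_third hq hd
  have h4 := al_le hq
  have h4' := al_pos (q := q)
  have h6 : 0 ≤ s * (1 - s) := mul_nonneg h0 (by linarith)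
  have h7 : s * (1 - s) ≤ 1 := by nlinarith
  unfold kb
  calc _ ≤ (1 : ℝ) * 1 * 1 := by
        apply mul_le_mul _ (by linarith) (by linarith) (by norm_num)
        apply mul_le_mul (by linarith) h7 h6 (by norm_num)
    _ = 1 := by norm_num

lemma dd_upper {q : ℝ} (hq : 1 ≤ q) : dd q ≤ 1 := by
  have h2 := be_pos hq
  have h3 := be_le hq
  have h4 := al_le hq
  have h4' := al_pos (q := q)
  unfold dd
  nlinarith

lemma cube_diff {t s : ℝ} (ht0 : 0 ≤ t) (ht1 : t ≤ 1) (h0 : 0 ≤ s) (h1 : s ≤ 1) :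
    0 ≤ t ^ 3 * (1 - s) ^ 3 - (max (t - s) 0) ^ 3 ∧
    t ^ 3 * (1 - s) ^ 3 - (max (t - s) 0) ^ 3 ≤ 3 * (t * (1 - t)) := by
  have hx0 : 0 ≤ t * (1 - s) := mul_nonneg ht0 (by linarith)
  rcases le_total s t with h | h
  · rw [max_eq_left (by linarith)]
    have hy0 : 0 ≤ t - s := by linarith
    have hyx : t - s ≤ t * (1 - s) := by nlinarith
    have hxt : t * (1 - s) ≤ t := by nlinarith
    have e : t ^ 3 * (1 - s) ^ 3 - (t - s) ^ 3 = (s * (1 - t)) *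
      ((t * (1 - s)) ^ 2 + (t * (1 - s)) * (t - s) + (t - s) ^ 2) := by ring
    rw [e]
    have hs : 0 ≤ s * (1 - t) := mul_nonneg h0 (by linarith)
    constructor
    · positivity
    · have hb : (t * (1 - s)) ^ 2 + (t * (1 - s)) * (t - s) + (t - s) ^ 2 ≤ 3 := by nlinarith
      have hs2 : s * (1 - t) ≤ t * (1 - t) := mul_le_mul_of_nonneg_right h (by linarith)
      nlinarith
  · rw [max_eq_right (by linarith)]
    have e : t ^ 3 * (1 - s) ^ 3 - 0 ^ 3 = (t * (1 - s)) ^ 3 := by ring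
    rw [e]
    refine ⟨by positivity, ?_⟩
    have h3 : t * (1 - s) ≤ 1 := by nlinarith
    have h4 : (t * (1 - s)) ^ 3 ≤ t * (1 - s) := by
      have : (t * (1 - s)) ^ 2 ≤ 1 := by nlinarith
      nlinarith
    have h5 : t * (1 - s) ≤ t * (1 - t) := mul_le_mul_of_nonneg_left (by linarith) ht0
    have h6 : 0 ≤ t * (1 - t) := mul_nonneg ht0 (by linarith)
    linarith

lemma KK_lower {q t s : ℝ} (hq : 1 ≤ q) (hq3 : q ≤ 3) (hd : 0 ≤ dd q)
    (ht0 : 0 ≤ t) (ht1 : t ≤ 1) (h0 : 0 ≤ s) (h1 : s ≤ 1) :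
    1 / 10 ^ 6 * (s * (1 - s)) * (t * (1 - t)) ≤ KK q t s := by
  have h2 := ka_lower hq hq3 h0 h1
  have h3 := kb_nonneg hq hd h0 h1
  have h4 := (cube_diff ht0 ht1 h0 h1).1
  have h5 : 0 ≤ 1 - t := by linarith
  have h6 := ka_nonneg hq h0 h1
  have h7 : t * (1 - t) ≤ t * (1 - t ^ 2) := by
    apply mul_le_mul_of_nonneg_left _ ht0
    nlinarith
  unfold KK
  have h8 : 1 / 10 ^ 6 * (s * (1 - s)) * (t * (1 - t)) ≤ ka q s * (t * (1 - t ^ 2)) :=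
    mul_le_mul h2 h7 (by positivity) h6
  have h9 : 0 ≤ kb q s / 2 * (t ^ 2 * (1 - t)) := by positivity
  have h10 : 0 ≤ dd q / 6 * (t ^ 3 * (1 - s) ^ 3 - (max (t - s) 0) ^ 3) := by positivity
  linarith

lemma KK_upper {q t s : ℝ} (hq : 1 ≤ q) (hd : 0 ≤ dd q)
    (ht0 : 0 ≤ t) (ht1 : t ≤ 1) (h0 : 0 ≤ s) (h1 : s ≤ 1) :
    KK q t s ≤ 4 * (t * (1 - t)) := by
  have h2 := ka_upper hq h0 h1
  have h3 := kb_upper hq hd h0 h1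
  have h4 := (cube_diff ht0 ht1 h0 h1)
  have h5 : 0 ≤ 1 - t := by linarith
  have h6 := ka_nonneg hq h0 h1
  have h6' := kb_nonneg hq hd h0 h1
  have hdu := dd_upper hq
  have hw : 0 ≤ t * (1 - t) := by positivity
  have h7 : t * (1 - t ^ 2) ≤ 2 * (t * (1 - t)) := by nlinarith
  have h7' : 0 ≤ t * (1 - t ^ 2) := mul_nonneg ht0 (by nlinarith)
  have h8 : t ^ 2 * (1 - t) ≤ t * (1 - t) := by nlinarith
  have h8' : 0 ≤ t ^ 2 * (1 - t) := by positivity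
  unfold KK
  have a1 : ka q s * (t * (1 - t ^ 2)) ≤ 1 * (2 * (t * (1 - t))) := mul_le_mul h2 h7 h7' (by norm_num)
  have a2 : kb q s / 2 * (t ^ 2 * (1 - t)) ≤ 1 / 2 * (t * (1 - t)) :=
    mul_le_mul (by linarith) h8 h8' (by norm_num)
  have a3 : dd q / 6 * (t ^ 3 * (1 - s) ^ 3 - (max (t - s) 0) ^ 3) ≤ 1 / 6 * (3 * (t * (1 - t))) :=
    mul_le_mul (by linarith) h4.2 h4.1 (by norm_num)
  linarith

/-- boundary identities -/
lemma bc1 {q s : ℝ} (hq : 1 ≤ q) :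
    -2 * ka q s - kb q s / 2 + dd q / 2 * ((1 - s) ^ 3 - (1 - s) ^ 2) = - q ^ 5 * ka q s := by
  have h := q5_be hq
  have : q ^ 5 * ka q s = (q ^ 5 * be q) / 12 * (s * (1 - s)) * ((1 - s) * (1 - al q) + al q * s) := by
    unfold ka; ring
  rw [neg_mul (q ^ 5), this, h]
  unfold ka kb dd
  ring
lemma bc2 {q s : ℝ} :
    -6 * ka q s - 2 * kb q s + dd q * ((1 - s) ^ 3 - (1 - s)) = - q ^ 4 * kb q s := by
  have h := q4_al (q := q)
  have : q ^ 4 * kb q s = (q ^ 4 * al q) * (s * (1 - s)) * ((2 - s) / 6 - be q / 2) := by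
    unfold kb; ring
  rw [neg_mul (q ^ 4), this, h]
  unfold ka kb dd
  ring
lemma kc_eq {q s : ℝ} : kc q s = (1-s)^3/6 - be q * (1-s)^2/2 - (al q / 2 - al q * be q) * (1 - s) := by
  unfold kc ka kb dd
  ring
lemma kc_eq2 {q s : ℝ} : kc q s = (1 - s) * dd q - s * (1 - s) * ((2 - s) / 6 - be q / 2) := by
  unfold kc ka kb dd
  ring
open MeasureTheory in
lemma fp_concrete {q0 : ℝ} (h1 : 1 ≤ q0) (hd0 : 0 ≤ dd q0) :
    ∃ g : ℝ → ℝ → ℝ,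
      ContinuousOn (fun q => ∫ s in (0:ℝ)..1, mm q s * g q s) (Icc q0 3) ∧
      ∀ q ∈ Icc q0 3, Continuous (g q) ∧ (∀ t ∈ Ioo (0:ℝ) 1, 0 < g q t) ∧
        ∀ t ∈ Icc (0:ℝ) 1, (g q t) ^ 3 = ∫ s in (0:ℝ)..1, KK q t s * g q s := by
  have hq1 : ∀ q : Icc q0 3, 1 ≤ (q:ℝ) := fun q => h1.trans q.2.1
  have hqd : ∀ q : Icc q0 3, 0 ≤ dd q := fun q => hd0.trans (dd_mono h1 q.2.1)
  have hal : Continuous (fun q : Icc q0 3 => al q) := by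
    unfold al
    have : ∀ q : Icc q0 3, 1 + (q:ℝ) ^ 4 ≠ 0 := fun q => by positivity
    fun_prop (disch := assumption)
  have hbe : Continuous (fun q : Icc q0 3 => be q) := by
    unfold be
    have : ∀ q : Icc q0 3, 1 + (q:ℝ) ^ 5 ≠ 0 := fun q => by
      have := hq1 q
      positivity
    fun_prop (disch := assumption)
  have hdc : Continuous (fun q : Icc q0 3 => dd q) := by
    unfold dd; fun_prop
  have hkac : ∀ s, Continuous (fun q : Icc q0 3 => ka q s) := by
    intro s; unfold ka; fun_prop
  have hkbc : ∀ s, Continuous (fun q : Icc q0 3 => kb q s) := by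
    intro s; unfold kb; fun_prop
  have hmmc : ∀ s, Continuous (fun q : Icc q0 3 => mm q s) := by
    intro s
    have := hkac s
    have := hkbc s
    unfold mm kc; fun_prop
  have hmms : ∀ q, Continuous (fun s : ℝ => mm q s) := by
    intro q; unfold mm kc ka kb; fun_prop
  have hKKc : ∀ q, Continuous (fun p : ℝ × ℝ => KK q p.1 p.2) := by
    intro q
    unfold KK ka kb
    fun_prop
  set w : ℝ → ℝ := fun s => s * (1 - s) with hw
  have hwpos : ∀ s : Ioo (0:ℝ) 1, 0 < w s := fun s => mul_pos s.2.1 (by linarith [s.2.2])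
  have hwle : ∀ s : Ioo (0:ℝ) 1, w s ≤ 1 := fun s => by
    have := s.2.1; have := s.2.2
    simp only [hw]; nlinarith
  set c : ℝ → ℝ := fun s => (w s) ^ ((1:ℝ)/3) with hcdef
  have hwcont : Continuous w := by fun_prop
  have hccont : Continuous c := hwcont.rpow_const (fun s => Or.inr (by norm_num))
  have hcpos : ∀ s : Ioo (0:ℝ) 1, 0 < c s := fun s => Real.rpow_pos_of_pos (hwpos s) _
  have hcle : ∀ s : Ioo (0:ℝ) 1, c s ≤ 1 := fun s =>
    Real.rpow_le_one (hwpos s).le (hwle s) (by norm_num)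
  have hc3 : ∀ s : Ioo (0:ℝ) 1, (c s) ^ 3 = w s := fun s => by
    rw [hcdef]
    simp only
    rw [← Real.rpow_natCast, ← Real.rpow_mul (hwpos s).le]
    norm_num
  obtain ⟨μ, hμ⟩ : ∃ μ : Measure (Ioo (0:ℝ) 1), μ = Measure.comap Subtype.val volume := ⟨_, rfl⟩
  have hfin : IsFiniteMeasure μ := by
    refine ⟨?_⟩
    rw [hμ, comap_subtype_coe_apply measurableSet_Ioo, image_univ, Subtype.range_coe]
    exact measure_Ioo_lt_top
  have hμint : ∀ F : ℝ → ℝ, ∫ s : Ioo (0:ℝ) 1, F s ∂μ = ∫ s in (0:ℝ)..1, F s := by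
    intro F
    rw [hμ, integral_subtype_comap measurableSet_Ioo, intervalIntegral.integral_of_le zero_le_one,
      integral_Ioc_eq_integral_Ioo]
  have hlcont : Continuous (fun s : ℝ => 1 / 10 ^ 6 * w s * c s) := by fun_prop
  obtain ⟨v, hv⟩ := fp_exists (Q := Icc q0 3) (S := Ioo (0:ℝ) 1) μ
    (fun p s => KK p.1 p.2 s / w p.2 * c s) (fun s => 1 / 10 ^ 6 * w s * c s) 4
    (by
      intro s
      have := (hkac s).comp (continuous_fst (X := Icc q0 3) (Y := Ioo (0:ℝ) 1))
      have := (hkbc s).comp (continuous_fst (X := Icc q0 3) (Y := Ioo (0:ℝ) 1))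
      have := hdc.comp (continuous_fst (X := Icc q0 3) (Y := Ioo (0:ℝ) 1))
      have h5 : Continuous (fun p : Icc q0 3 × Ioo (0:ℝ) 1 => KK p.1 p.2 s) := by
        unfold KK
        simp only [Function.comp_def] at *
        fun_prop
      have h6 : Continuous (fun p : Icc q0 3 × Ioo (0:ℝ) 1 => w p.2) := by fun_prop
      exact (h5.div h6 (fun p => (hwpos p.2).ne')).mul continuous_const)
    (by
      intro p
      have h5 : Continuous (fun s : Ioo (0:ℝ) 1 => KK p.1 p.2 s) :=
        (hKKc p.1).comp (continuous_const.prodMk continuous_subtype_val)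
      fun_prop)
    (by
      refine Integrable.of_bound (C := 1) ?_ (Eventually.of_forall fun s => ?_)
      · exact (hlcont.comp continuous_subtype_val).aestronglyMeasurable
      · have h1 := hwpos s
        have h2 := hwle s
        have h3 := hcpos s
        have h4 := hcle s
        rw [Real.norm_of_nonneg (by positivity)]
        nlinarith)
    (by
      intro s
      have h1 := hwpos s
      have h3 := hcpos s
      positivity)
    (by
      rw [hμint (fun s => 1 / 10 ^ 6 * w s * c s)]
      apply intervalIntegral.intervalIntegral_pos_of_pos_on (hlcont.intervalIntegrable _ _) _ (by norm_num)
      intro s hs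
      have h1 := hwpos ⟨s, hs⟩
      have h3 := hcpos ⟨s, hs⟩
      positivity)
    (by
      intro p s
      apply mul_le_mul_of_nonneg_right _ (hcpos s).le
      rw [le_div_iff₀ (hwpos p.2)]
      exact KK_lower (hq1 p.1) p.1.2.2 (hqd p.1) p.2.2.1.le p.2.2.2.le s.2.1.le s.2.2.le)
    (by
      intro p s
      have h1 : KK p.1 p.2 s / w p.2 ≤ 4 := by
        rw [div_le_iff₀ (hwpos p.2)]
        exact KK_upper (hq1 p.1) (hqd p.1) p.2.2.1.le p.2.2.2.le s.2.1.le s.2.2.le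
      calc _ ≤ 4 * c s := mul_le_mul_of_nonneg_right h1 (hcpos s).le
        _ ≤ 4 := by linarith [hcle s])
  classical
  -- the raw function
  obtain ⟨g0, hg0⟩ : ∃ g0 : Icc q0 3 → ℝ → ℝ, ∀ q s, g0 q s =
      if h : s ∈ Ioo (0:ℝ) 1 then c s * Real.exp (v (q, ⟨s, h⟩) / 3) else 0 :=
    ⟨_, fun _ _ => rfl⟩
  have hg0S : ∀ q (s : Ioo (0:ℝ) 1), g0 q s = c s * Real.exp (v (q, s) / 3) := by
    intro q s
    rw [hg0, dif_pos s.2]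
  have hg0pos : ∀ q (s : Ioo (0:ℝ) 1), 0 < g0 q s := by
    intro q s
    rw [hg0S]
    have := hcpos s
    positivity
  have hg0out : ∀ q s, s ∉ Ioo (0:ℝ) 1 → g0 q s = 0 := by
    intro q s h
    rw [hg0, dif_neg h]
  have hg0nn : ∀ q s, 0 ≤ g0 q s := by
    intro q s
    by_cases h : s ∈ Ioo (0:ℝ) 1
    · exact (hg0pos q ⟨s, h⟩).le
    · rw [hg0out q s h]
  have hg0bd : ∀ q s, g0 q s ≤ Real.exp (‖v‖ / 3) := by
    intro q s
    by_cases h : s ∈ Ioo (0:ℝ) 1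
    · have := hg0S q ⟨s, h⟩
      simp only at this
      rw [this]
      have h1 : Real.exp (v (q, ⟨s, h⟩) / 3) ≤ Real.exp (‖v‖ / 3) := by
        apply Real.exp_le_exp.2
        have := (le_abs_self _).trans (v.norm_coe_le_norm (q, ⟨s, h⟩))
        linarith
      have h2 := hcle ⟨s, h⟩
      simp only at h2
      have := Real.exp_pos (v (q, ⟨s, h⟩) / 3)
      nlinarith
    · rw [hg0out q s h]; positivity
  have hg0cont : ∀ q, ContinuousOn (g0 q) (Ioo 0 1) := by
    intro q
    rw [continuousOn_iff_continuous_domRestrict]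
    have : (Ioo (0:ℝ) 1).domRestrict (g0 q) =
        fun s : Ioo (0:ℝ) 1 => c s * Real.exp (v (q, s) / 3) := by
      funext s
      exact hg0S q s
    rw [this]
    fun_prop
  have hg0meas : ∀ q, Measurable (g0 q) := by
    intro q
    have h1 : g0 q = (Ioo (0:ℝ) 1).indicator (g0 q) := by
      funext s
      by_cases h : s ∈ Ioo (0:ℝ) 1
      · rw [indicator_of_mem h]
      · rw [indicator_of_notMem h, hg0out q s h]
    rw [h1]
    have : Measurable ((Ioo (0:ℝ) 1).domRestrict (g0 q)) :=
      (continuousOn_iff_continuous_domRestrict.1 (hg0cont q)).measurable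
    exact measurable_of_restrict_of_restrict_compl measurableSet_Ioo
      (by convert this using 1; funext s; simp)
      (by
        have : (Ioo (0:ℝ) 1)ᶜ.domRestrict ((Ioo (0:ℝ) 1).indicator (g0 q)) = fun _ => 0 := by
          funext s
          simp only [domRestrict_apply]
          rw [indicator_of_notMem s.2]
        rw [this]; exact measurable_const)
  have heq : ∀ q, ∀ t ∈ Icc (0:ℝ) 1, (g0 q t) ^ 3 = ∫ s in (0:ℝ)..1, KK q t s * g0 q s := by
    intro q t ht
    by_cases h : t ∈ Ioo (0:ℝ) 1
    · have h1 := hv (q, ⟨t, h⟩)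
      have h2 := hg0S q ⟨t, h⟩
      simp only at h1 h2
      have h3 := hc3 ⟨t, h⟩
      have h4 := hwpos ⟨t, h⟩
      simp only at h3 h4
      rw [h2, mul_pow, h3, ← Real.exp_nat_mul]
      have e1 : ((3:ℕ):ℝ) * (v (q, ⟨t, h⟩) / 3) = v (q, ⟨t, h⟩) := by push_cast; ring
      rw [e1, h1, ← hμint, ← integral_const_mul]
      congr 1
      funext s
      rw [hg0S]
      field_simp
    · rw [hg0out q t h]
      have : t = 0 ∨ t = 1 := by
        by_contra hcon
        push Not at hcon
        exact h ⟨lt_of_le_of_ne ht.1 (Ne.symm hcon.1), lt_of_le_of_ne ht.2 hcon.2⟩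
      symm
      rw [← hμint]
      have : ∀ s : Ioo (0:ℝ) 1, KK q t s * g0 q s = 0 := by
        intro s
        rcases this with h | h
        · subst h
          have : max (0 - (s:ℝ)) 0 = 0 := max_eq_right (by linarith [s.2.1])
          simp only [KK, this]
          ring
        · subst h
          have : max (1 - (s:ℝ)) 0 = 1 - s := max_eq_left (by linarith [s.2.2])
          simp [KK, this]
      simp [this]
  obtain ⟨U, hU⟩ : ∃ U : Icc q0 3 → ℝ → ℝ, ∀ q t, U q t = ∫ s in (0:ℝ)..1, KK q t s * g0 q s :=
    ⟨_, fun _ _ => rfl⟩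
  have hUc : ∀ q, ContinuousOn (U q) (Icc 0 1) := by
    intro q
    have e : U q = fun t => ∫ s in (0:ℝ)..1, KK q t s * g0 q s := funext (hU q)
    rw [e, continuousOn_iff_continuous_domRestrict]
    simp only [domRestrict_def]
    refine intervalIntegral.continuous_of_dominated_interval
      (bound := fun _ => 4 * Real.exp (‖v‖ / 3)) ?_ ?_ ?_ ?_
    · intro t
      have : Continuous (fun s => KK q t s) :=
        (hKKc q).comp (continuous_const.prodMk continuous_id)
      exact (this.measurable.mul (hg0meas q)).aestronglyMeasurable
    · intro t
      refine Eventually.of_forall fun s hs => ?_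
      rw [uIoc_of_le zero_le_one] at hs
      have k1 := KK_lower (hq1 q) q.2.2 (hqd q) t.2.1 t.2.2 hs.1.le hs.2
      have k2 := KK_upper (hq1 q) (hqd q) t.2.1 t.2.2 hs.1.le hs.2
      have k0 : 0 ≤ KK q t s := by
        refine le_trans ?_ k1
        have := t.2.1; have := t.2.2
        have a1 : 0 ≤ 1 - (t:ℝ) := by linarith
        have a2 : 0 ≤ 1 - s := by linarith [hs.2]
        have := hs.1.le
        positivity
      have k3 : (t:ℝ) * (1 - t) ≤ 1 := by
        have := t.2.1; have := t.2.2
        nlinarith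
      rw [Real.norm_of_nonneg (mul_nonneg k0 (hg0nn q s))]
      exact mul_le_mul (by linarith) (hg0bd q s) (hg0nn q s) (by norm_num)
    · exact intervalIntegrable_const
    · refine Eventually.of_forall fun s hs => ?_
      have : Continuous (fun t : Icc (0:ℝ) 1 => KK q t s) :=
        (hKKc q).comp (continuous_subtype_val.prodMk continuous_const)
      fun_prop
  have hg0c : ∀ q, ContinuousOn (g0 q) (Icc 0 1) := by
    intro q
    have : ContinuousOn (fun t => (U q t) ^ ((1:ℝ)/3)) (Icc 0 1) :=
      (hUc q).rpow_const (fun t _ => Or.inr (by norm_num))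
    refine this.congr fun t ht => ?_
    simp only
    rw [hU, ← heq q t ht, ← Real.rpow_natCast, ← Real.rpow_mul (hg0nn q t)]
    norm_num
  obtain ⟨g, hg⟩ : ∃ g : ℝ → ℝ → ℝ, ∀ q (hq : q ∈ Icc q0 3), g q =
      IccExtend (zero_le_one' ℝ) ((Icc (0:ℝ) 1).domRestrict (g0 ⟨q, hq⟩)) :=
    ⟨fun q => if hq : q ∈ Icc q0 3 then
      IccExtend (zero_le_one' ℝ) ((Icc (0:ℝ) 1).domRestrict (g0 ⟨q, hq⟩)) else 0,
      fun q hq => dif_pos hq⟩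
  have hgg : ∀ q (hq : q ∈ Icc q0 3), ∀ s ∈ Icc (0:ℝ) 1, g q s = g0 ⟨q, hq⟩ s := by
    intro q hq s hs
    rw [hg q hq, IccExtend_of_mem _ _ hs]
    rfl
  refine ⟨g, ?_, ?_⟩
  · rw [continuousOn_iff_continuous_domRestrict]
    have e : (Icc q0 3).domRestrict (fun q => ∫ s in (0:ℝ)..1, mm q s * g q s)
        = fun q : Icc q0 3 => ∫ s : Ioo (0:ℝ) 1, mm q s * (c s * Real.exp (v (q, s) / 3)) ∂μ := by
      funext q
      simp only [domRestrict_apply]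
      rw [← hμint]
      congr 1
      funext s
      rw [hgg q q.2 s ⟨s.2.1.le, s.2.2.le⟩, ← hg0S]
    rw [e]
    have hbd : ∃ M, ∀ (q : Icc q0 3) (s : Ioo (0:ℝ) 1), ‖mm q s‖ ≤ M := by
      refine ⟨28 * (6 * 1 + 3 * 1 + 1) + 1, fun q s => ?_⟩
      have a1 := ka_nonneg (hq1 q) s.2.1.le s.2.2.le
      have a2 := ka_upper (hq1 q) s.2.1.le s.2.2.le
      have a3 := kb_nonneg (hq1 q) (hqd q) s.2.1.le s.2.2.le
      have a4 := kb_upper (hq1 q) (hqd q) s.2.1.le s.2.2.le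
      have a5 := hqd q
      have a6 := dd_upper (hq1 q)
      have a7 : (q:ℝ) ^ 3 ≤ 3 ^ 3 := by
        have := hq1 q
        have := q.2.2
        gcongr
      have a8 : 0 ≤ (q:ℝ) ^ 3 := by have := hq1 q; positivity
      have a9 : 0 ≤ 1 - (s:ℝ) := by linarith [s.2.2]
      have a10 : (1 - (s:ℝ)) ^ 3 ≤ 1 := pow_le_one₀ a9 (by linarith [s.2.1])
      have a11 : 0 ≤ (1 - (s:ℝ)) ^ 3 := by positivity
      have a12 : dd q * (1 - (s:ℝ)) ^ 3 ≤ 1 := by nlinarith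
      have a13 : 0 ≤ dd q * (1 - (s:ℝ)) ^ 3 := by positivity
      have a14 : |kc q s| ≤ 6 * 1 + 3 * 1 + 1 := by
        unfold kc; rw [abs_le]; constructor <;> linarith
      rw [Real.norm_eq_abs]
      unfold mm
      refine (abs_sub _ _).trans ?_
      rw [abs_mul, abs_of_nonneg (by linarith : 0 ≤ 1 + (q:ℝ) ^ 3), abs_of_nonneg a5]
      have := mul_le_mul (by linarith : 1 + (q:ℝ) ^ 3 ≤ 28) a14 (abs_nonneg _) (by norm_num)
      linarith
    obtain ⟨M, hM⟩ := hbd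
    refine continuous_of_dominated (bound := fun _ => M * Real.exp (‖v‖ / 3)) ?_ ?_
      (integrable_const _) ?_
    · intro q
      have := (hmms q).comp (continuous_subtype_val (p := fun s => s ∈ Ioo (0:ℝ) 1))
      simp only [Function.comp_def] at this
      have : Continuous (fun s : Ioo (0:ℝ) 1 => mm q s * (c s * Real.exp (v (q, s) / 3))) := by
        fun_prop
      exact this.aestronglyMeasurable
    · intro q
      refine Eventually.of_forall fun s => ?_
      rw [← hg0S, norm_mul, Real.norm_of_nonneg (hg0nn q s)]
      exact mul_le_mul (hM q s) (hg0bd q s) (hg0nn q s) ((norm_nonneg _).trans (hM q s))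
    · refine Eventually.of_forall fun s => ?_
      have := hmmc s
      fun_prop
  · intro q hq
    refine ⟨?_, ?_, ?_⟩
    · rw [hg q hq]
      exact (continuousOn_iff_continuous_domRestrict.1 (hg0c ⟨q, hq⟩)).Icc_extend'
    · intro t ht
      rw [hgg q hq t ⟨ht.1.le, ht.2.le⟩]
      exact hg0pos ⟨q, hq⟩ ⟨t, ht⟩
    · intro t ht
      rw [hgg q hq t ht, heq ⟨q, hq⟩ t ht]
      apply intervalIntegral.integral_congr
      intro s hs
      rw [uIcc_of_le zero_le_one] at hs
      simp only
      rw [hgg q hq s hs]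
lemma KK_anti {q x t s : ℝ} (hq : 1 ≤ q) (hd : 0 ≤ dd q) (hx : 0 < x) (hxt : x ≤ t)
    (h0 : 0 ≤ s) (h1 : s ≤ 1) : x ^ 3 * KK q t s ≤ t ^ 3 * KK q x s := by
  have ha := ka_nonneg hq h0 h1
  have hb := kb_nonneg hq hd h0 h1
  have ht : 0 < t := hx.trans_le hxt
  have e1 : x ^ 3 * (t * (1 - t ^ 2)) ≤ t ^ 3 * (x * (1 - x ^ 2)) := by
    have : 0 ≤ x * t * (t ^ 2 - x ^ 2) := by
      apply mul_nonneg (by positivity)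
      nlinarith
    linarith
  have e2 : x ^ 3 * (t ^ 2 * (1 - t)) ≤ t ^ 3 * (x ^ 2 * (1 - x)) := by
    have : 0 ≤ x ^ 2 * t ^ 2 * (t - x) := by
      apply mul_nonneg (by positivity)
      linarith
    linarith
  have e3 : t * max (x - s) 0 ≤ x * max (t - s) 0 := by
    rcases le_total (x - s) 0 with h | h
    · rw [max_eq_right h]
      have := le_max_right (t - s) 0
      simp only [mul_zero]
      positivity
    · rw [max_eq_left h, max_eq_left (by linarith)]
      nlinarith
  have e4 : (t * max (x - s) 0) ^ 3 ≤ (x * max (t - s) 0) ^ 3 := by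
    have := le_max_right (x - s) 0
    gcongr
  have e5 : x ^ 3 * (t ^ 3 * (1 - s) ^ 3 - (max (t - s) 0) ^ 3) ≤
      t ^ 3 * (x ^ 3 * (1 - s) ^ 3 - (max (x - s) 0) ^ 3) := by
    rw [mul_pow, mul_pow] at e4
    linarith
  have f1 := mul_le_mul_of_nonneg_left e1 ha
  have f2 := mul_le_mul_of_nonneg_left e2 (by linarith : 0 ≤ kb q s / 2)
  have f3 := mul_le_mul_of_nonneg_left e5 (by linarith : 0 ≤ dd q / 6)
  unfold KK
  linarith

lemma KK_cont (q t : ℝ) : Continuous (fun s => KK q t s) := by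
  unfold KK ka kb
  fun_prop
lemma mm_cont (q : ℝ) : Continuous (fun s => mm q s) := by
  unfold mm kc ka kb
  fun_prop

lemma g_anti {q : ℝ} (hq : 1 ≤ q) (hd : 0 ≤ dd q) {g : ℝ → ℝ} (hg : Continuous g)
    (hpos : ∀ t ∈ Ioo (0:ℝ) 1, 0 < g t)
    (heq : ∀ t ∈ Icc (0:ℝ) 1, (g t) ^ 3 = ∫ s in (0:ℝ)..1, KK q t s * g s)
    {x t : ℝ} (hx : 0 < x) (hxt : x ≤ t) (ht : t < 1) : x * g t ≤ t * g x := by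
  have h1 : (x * g t) ^ 3 ≤ (t * g x) ^ 3 := by
    rw [mul_pow, mul_pow, heq t ⟨by linarith, ht.le⟩, heq x ⟨hx.le, by linarith⟩,
      ← intervalIntegral.integral_const_mul, ← intervalIntegral.integral_const_mul]
    have c1 := KK_cont q t
    have c2 := KK_cont q x
    apply intervalIntegral.integral_mono_on_of_le_Ioo zero_le_one
    · apply Continuous.intervalIntegrable; fun_prop
    · apply Continuous.intervalIntegrable; fun_prop
    · intro s hs
      have := mul_le_mul_of_nonneg_right (KK_anti hq hd hx hxt hs.1.le hs.2.le) (hpos s hs).le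
      linarith
  have h2 := hpos x ⟨hx, by linarith⟩
  exact le_of_pow_le_pow_left₀ (by norm_num) (by nlinarith) h1

lemma al3 : al 3 = 1 / 82 := by unfold al; norm_num
lemma be3 : be 3 = 1 / 244 := by unfold be; norm_num
lemma dd3 : dd 3 = 4759 / 30012 := by unfold dd; rw [al3, be3]; norm_num

lemma mm3 (s : ℝ) : mm 3 s = 42831/10004 - 68607/5002*s + 1701/122*s^2 - 14/3*s^3 := by
  unfold mm
  rw [kc_eq, al3, be3, dd3]
  ring

lemma J3_pos {g : ℝ → ℝ} (hg : Continuous g)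
    (hpos : ∀ t ∈ Ioo (0:ℝ) 1, 0 < g t)
    (heq : ∀ t ∈ Icc (0:ℝ) 1, (g t) ^ 3 = ∫ s in (0:ℝ)..1, KK 3 t s * g s) :
    0 < ∫ s in (0:ℝ)..1, mm 3 s * g s := by
  have hd : 0 ≤ dd 3 := by rw [dd3]; norm_num
  have hroot : ∃ z ∈ Icc (0:ℝ) (4/5), mm 3 z = 0 := by
    have := intermediate_value_Icc' (by norm_num : (0:ℝ) ≤ 4/5) (mm_cont 3).continuousOn
    have h0 : (0:ℝ) ∈ Icc (mm 3 (4/5)) (mm 3 0) := by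
      constructor <;> (rw [mm3]; norm_num)
    obtain ⟨z, hz, h⟩ := this h0
    exact ⟨z, hz, h⟩
  obtain ⟨z, hz, hz0⟩ := hroot
  have hzpos : 0 < z := by
    rcases hz.1.lt_or_eq with h | h
    · exact h
    · exfalso
      rw [← h, mm3] at hz0
      norm_num at hz0
  have hz1 : z < 1 := by linarith [hz.2]
  have hgz := hpos z ⟨hzpos, hz1⟩
  have hfac : ∀ s ∈ Ioo (0:ℝ) 1, ∃ p, 0 ≤ p ∧ mm 3 s = (z - s) * p := by
    intro s hs
    have hs0 := hs.1
    have hs1 := hs.2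
    refine ⟨28 * (((1-s)^2 + (1-s)*(1-z) + (1-z)^2)/6 - (1/244) * ((1-s)+(1-z))/2
      - ((1/82)/2 - (1/82) * (1/244))), ?_, ?_⟩
    · have : (1/5:ℝ) ≤ 1 - z := by linarith [hz.2]
      nlinarith [mul_nonneg (by linarith : 0 ≤ 1 - s) (by linarith : (0:ℝ) ≤ 1 - z - 1/5), sq_nonneg (1-s)]
    · have : mm 3 s = mm 3 s - mm 3 z := by rw [hz0, sub_zero]
      rw [this]
      unfold mm
      rw [kc_eq, kc_eq, al3, be3]
      ring
  have hI : 0 < ∫ s in (0:ℝ)..1, mm 3 s * s := by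
    have : ∫ s in (0:ℝ)..1, mm 3 s * s = (42831/10004*((1:ℝ)^2/2) - 68607/5002*((1:ℝ)^3/3) + 1701/122*((1:ℝ)^4/4) - 14/3*((1:ℝ)^5/5)) - (42831/10004*((0:ℝ)^2/2) - 68607/5002*((0:ℝ)^3/3) + 1701/122*((0:ℝ)^4/4) - 14/3*((0:ℝ)^5/5)) := by
      apply intervalIntegral.integral_eq_sub_of_hasDerivAt
        (f := fun s : ℝ => (42831/10004*(s^2/2) - 68607/5002*(s^3/3) + 1701/122*(s^4/4) - 14/3*(s^5/5)))
      · intro x _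
        have h := (((((hasDerivAt_pow 2 x).div_const 2).const_mul (42831/10004)).sub
          (((hasDerivAt_pow 3 x).div_const 3).const_mul (68607/5002))).add
          (((hasDerivAt_pow 4 x).div_const 4).const_mul (1701/122))).sub
          (((hasDerivAt_pow 5 x).div_const 5).const_mul (14/3))
        refine h.congr_deriv ?_
        rw [mm3]
        push_cast
        ring
      · have := mm_cont 3
        apply Continuous.intervalIntegrable; fun_prop
    rw [this]; norm_num
  have hle : ∫ s in (0:ℝ)..1, g z / z * (mm 3 s * s) ≤ ∫ s in (0:ℝ)..1, mm 3 s * g s := by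
    have := mm_cont 3
    apply intervalIntegral.integral_mono_on_of_le_Ioo zero_le_one
    · apply Continuous.intervalIntegrable; fun_prop
    · apply Continuous.intervalIntegrable; fun_prop
    · intro s hs
      obtain ⟨p, hp, e⟩ := hfac s hs
      have hkey : 0 ≤ (z - s) * (z * g s - s * g z) := by
        rcases le_total s z with h | h
        · apply mul_nonneg (by linarith)
          linarith [g_anti (by norm_num) hd hg hpos heq hs.1 h hz1]
        · apply mul_nonneg_of_nonpos_of_nonpos (by linarith)
          linarith [g_anti (by norm_num) hd hg hpos heq hzpos h hs.2]
      have : 0 ≤ p * ((z - s) * (z * g s - s * g z)) / z := by positivity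
      have e2 : p * ((z - s) * (z * g s - s * g z)) / z =
        mm 3 s * g s - g z / z * (mm 3 s * s) := by
        rw [e]; field_simp
      linarith
  rw [intervalIntegral.integral_const_mul] at hle
  have : 0 < g z / z * ∫ s in (0:ℝ)..1, mm 3 s * s := by positivity
  linarith

lemma J0_neg {q : ℝ} (hq : 1 ≤ q) (hd : dd q = 0) {g : ℝ → ℝ} (hg : Continuous g)
    (hpos : ∀ t ∈ Ioo (0:ℝ) 1, 0 < g t) :
    ∫ s in (0:ℝ)..1, mm q s * g s < 0 := by
  have hm := mm_cont q
  have : 0 < ∫ s in (0:ℝ)..1, -(mm q s * g s) := by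
    apply intervalIntegral.intervalIntegral_pos_of_pos_on _ _ (by norm_num)
    · apply Continuous.intervalIntegrable; fun_prop
    · intro s hs
      have h1 := hpos s hs
      have h2 := be_third hq hd.ge
      have h3 : 0 < s * (1 - s) := mul_pos hs.1 (by linarith [hs.2])
      have h4 : 0 < (2 - s) / 6 - be q / 2 := by linarith [hs.2]
      unfold mm
      rw [kc_eq2, hd]
      have e : -(((1 + q ^ 3) * ((1 - s) * 0 - s * (1 - s) * ((2 - s) / 6 - be q / 2)) - 0) * g s)
        = (1 + q ^ 3) * (s * (1 - s) * ((2 - s) / 6 - be q / 2)) * g s := by ring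
      rw [e]
      positivity
  rw [intervalIntegral.integral_neg] at this
  linarith

lemma shoot : ∃ q : ℝ, 1 < q ∧ 0 < dd q ∧ ∃ g : ℝ → ℝ, Continuous g ∧
    (∀ t ∈ Ioo (0:ℝ) 1, 0 < g t) ∧
    (∀ t ∈ Icc (0:ℝ) 1, (g t) ^ 3 = ∫ s in (0:ℝ)..1, KK q t s * g s) ∧
    ∫ s in (0:ℝ)..1, mm q s * g s = 0 := by
  obtain ⟨q0, h1, h3, hd⟩ := exists_q0
  obtain ⟨g, hJ, hg⟩ := fp_concrete h1 hd.ge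
  have hm0 : q0 ∈ Icc q0 3 := ⟨le_rfl, h3⟩
  have hm3 : (3:ℝ) ∈ Icc q0 3 := ⟨h3, le_rfl⟩
  have n0 := J0_neg h1 hd (hg q0 hm0).1 (hg q0 hm0).2.1
  have n3 := J3_pos (hg 3 hm3).1 (hg 3 hm3).2.1 (hg 3 hm3).2.2
  obtain ⟨q, hq, hq0⟩ := intermediate_value_Icc h3 hJ ⟨n0.le, n3.le⟩
  simp only at hq0
  have hdq : 0 ≤ dd q := hd.ge.trans (dd_mono h1 hq.1)
  have hdpos : 0 < dd q := by
    rcases hdq.lt_or_eq with h | h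
    · exact h
    · have := J0_neg (h1.trans hq.1) h.symm (hg q hq).1 (hg q hq).2.1
      linarith
  refine ⟨q, ?_, hdpos, g q, (hg q hq).1, (hg q hq).2.1, (hg q hq).2.2, hq0⟩
  rcases (h1.trans hq.1).lt_or_eq with h | h
  · exact h
  · exfalso
    rw [← h] at hdpos
    unfold dd al be at hdpos
    norm_num at hdpos
open intervalIntegral in
lemma cubic_int {g : ℝ → ℝ} (hg : Continuous g) (a b c0 c1 c2 c3 : ℝ) (f : ℝ → ℝ)
    (hf : ∀ s, f s = c0 + c1 * s + c2 * s ^ 2 + c3 * s ^ 3) :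
    ∫ s in a..b, f s * g s = c0 * (∫ s in a..b, g s) + c1 * (∫ s in a..b, s * g s)
      + c2 * (∫ s in a..b, s ^ 2 * g s) + c3 * (∫ s in a..b, s ^ 3 * g s) := by
  have e : ∀ s, f s * g s = c0 * g s + c1 * (s * g s) + c2 * (s ^ 2 * g s) + c3 * (s ^ 3 * g s) := by
    intro s; rw [hf]; ring
  simp_rw [e]
  rw [integral_add, integral_add, integral_add, integral_const_mul, integral_const_mul,
    integral_const_mul, integral_const_mul] <;>
  · apply Continuous.intervalIntegrable
    fun_prop

lemma int_hasDeriv {g : ℝ → ℝ} (hg : Continuous g) (t : ℝ) :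
    HasDerivAt (fun t => ∫ s in (0:ℝ)..t, g s) (g t) t :=
  intervalIntegral.integral_hasDerivAt_right (hg.intervalIntegrable _ _)
    hg.stronglyMeasurable.stronglyMeasurableAtFilter hg.continuousAt

lemma max_int {g : ℝ → ℝ} (hg : Continuous g) {t : ℝ} (ht : t ∈ Icc (0:ℝ) 1) :
    ∫ s in (0:ℝ)..1, (max (t - s) 0) ^ 3 * g s = ∫ s in (0:ℝ)..t, (t - s) ^ 3 * g s := by
  have hi : ∀ a b, IntervalIntegrable (fun s => (max (t - s) 0) ^ 3 * g s) MeasureTheory.volume a b := by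
    intro a b
    apply Continuous.intervalIntegrable
    fun_prop
  rw [← intervalIntegral.integral_add_adjacent_intervals (hi 0 t) (hi t 1)]
  have h1 : ∫ s in (0:ℝ)..t, (max (t - s) 0) ^ 3 * g s = ∫ s in (0:ℝ)..t, (t - s) ^ 3 * g s := by
    apply intervalIntegral.integral_congr
    intro s hs
    rw [uIcc_of_le ht.1] at hs
    simp only
    rw [max_eq_left (by linarith [hs.2])]
  have h2 : ∫ s in t..1, (max (t - s) 0) ^ 3 * g s = ∫ s in t..1, (0:ℝ) := by
    apply intervalIntegral.integral_congr
    intro s hs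
    rw [uIcc_of_le ht.2] at hs
    simp only
    rw [max_eq_right (by linarith [hs.1])]
    ring
  rw [h1, h2]
  simp

lemma chainU {q : ℝ} (hq : 1 < q) {g : ℝ → ℝ} (hg : Continuous g)
    (heq : ∀ t ∈ Icc (0:ℝ) 1, (g t) ^ 3 = ∫ s in (0:ℝ)..1, KK q t s * g s)
    (hJ : ∫ s in (0:ℝ)..1, mm q s * g s = 0) :
    ∃ U0 U1 U2 U3 : ℝ → ℝ, (∀ t, HasDerivAt U0 (U1 t) t) ∧ (∀ t, HasDerivAt U1 (U2 t) t) ∧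
      (∀ t, HasDerivAt U2 (U3 t) t) ∧ (∀ t, HasDerivAt U3 (-dd q * g t) t) ∧
      (∀ t ∈ Icc (0:ℝ) 1, U0 t = (g t) ^ 3) ∧ U0 1 = - q ^ 6 * U0 0 ∧ U1 1 = - q ^ 5 * U1 0 ∧
      U2 1 = - q ^ 4 * U2 0 ∧ U3 1 = - q ^ 3 * U3 0 := by
  obtain ⟨G0, hG0⟩ : ∃ G : ℝ → ℝ, ∀ t, G t = ∫ s in (0:ℝ)..t, g s := ⟨_, fun _ => rfl⟩
  obtain ⟨G1, hG1⟩ : ∃ G : ℝ → ℝ, ∀ t, G t = ∫ s in (0:ℝ)..t, s * g s := ⟨_, fun _ => rfl⟩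
  obtain ⟨G2, hG2⟩ : ∃ G : ℝ → ℝ, ∀ t, G t = ∫ s in (0:ℝ)..t, s ^ 2 * g s := ⟨_, fun _ => rfl⟩
  obtain ⟨G3, hG3⟩ : ∃ G : ℝ → ℝ, ∀ t, G t = ∫ s in (0:ℝ)..t, s ^ 3 * g s := ⟨_, fun _ => rfl⟩
  have d0 : ∀ t, HasDerivAt G0 (g t) t := by
    intro t; rw [funext hG0]; exact int_hasDeriv hg t
  have d1 : ∀ t, HasDerivAt G1 (t * g t) t := by
    intro t; rw [funext hG1]; exact int_hasDeriv (g := fun s => s * g s) (by fun_prop) t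
  have d2 : ∀ t, HasDerivAt G2 (t ^ 2 * g t) t := by
    intro t; rw [funext hG2]; exact int_hasDeriv (g := fun s => s ^ 2 * g s) (by fun_prop) t
  have d3 : ∀ t, HasDerivAt G3 (t ^ 3 * g t) t := by
    intro t; rw [funext hG3]; exact int_hasDeriv (g := fun s => s ^ 3 * g s) (by fun_prop) t
  have z0 : G0 0 = 0 := by rw [hG0]; simp
  have z1 : G1 0 = 0 := by rw [hG1]; simp
  have z2 : G2 0 = 0 := by rw [hG2]; simp
  have z3 : G3 0 = 0 := by rw [hG3]; simp
  have hcub : ∀ (t c0 c1 c2 c3 : ℝ) (f : ℝ → ℝ),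
      (∀ s, f s = c0 + c1 * s + c2 * s ^ 2 + c3 * s ^ 3) →
      ∫ s in (0:ℝ)..t, f s * g s = c0 * G0 t + c1 * G1 t + c2 * G2 t + c3 * G3 t := by
    intro t c0 c1 c2 c3 f hf
    rw [cubic_int hg 0 t c0 c1 c2 c3 f hf, hG0, hG1, hG2, hG3]
  obtain ⟨A, hA⟩ : ∃ A : ℝ, A = be q / 12 * ((1 - al q) * G1 1 + (3 * al q - 2) * G2 1
    - (2 * al q - 1) * G3 1) := ⟨_, rfl⟩
  obtain ⟨B, hB⟩ : ∃ B : ℝ, B = al q * ((1 / 3 - be q / 2) * G1 1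
    - (1 / 2 - be q / 2) * G2 1 + 1 / 6 * G3 1) := ⟨_, rfl⟩
  obtain ⟨R, hR⟩ : ∃ R : ℝ, R = G0 1 - 3 * G1 1 + 3 * G2 1 - G3 1 := ⟨_, rfl⟩
  have hAi : ∫ s in (0:ℝ)..1, ka q s * g s = A := by
    rw [hcub 1 0 (be q / 12 * (1 - al q)) (be q / 12 * (3 * al q - 2))
      (-(be q / 12 * (2 * al q - 1))) (ka q) (by intro s; unfold ka; ring), hA]
    ring
  have hBi : ∫ s in (0:ℝ)..1, kb q s * g s = B := by
    rw [hcub 1 0 (al q * (1 / 3 - be q / 2)) (-(al q * (1 / 2 - be q / 2)))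
      (al q / 6) (kb q) (by intro s; unfold kb; ring), hB]
    ring
  have hRi : ∫ s in (0:ℝ)..1, (1 - s) ^ 3 * g s = R := by
    rw [hcub 1 1 (-3) 3 (-1) (fun s => (1 - s) ^ 3) (by intro s; ring), hR]
    ring
  have cka : Continuous (ka q) := by unfold ka; fun_prop
  have ckb : Continuous (kb q) := by unfold kb; fun_prop
  have hmi : (1 + q ^ 3) * (-6 * A - 3 * B + dd q * R) - dd q * G0 1 = 0 := by
    rw [← hJ, ← hAi, ← hBi, ← hRi, hG0]
    have e : ∀ s, mm q s * g s = (1 + q ^ 3) * (-6) * (ka q s * g s)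
      + (1 + q ^ 3) * (-3) * (kb q s * g s) + (1 + q ^ 3) * dd q * ((1 - s) ^ 3 * g s)
      + -dd q * g s := by
      intro s; unfold mm kc; ring
    simp_rw [e]
    rw [intervalIntegral.integral_add, intervalIntegral.integral_add, intervalIntegral.integral_add,
      intervalIntegral.integral_const_mul, intervalIntegral.integral_const_mul,
      intervalIntegral.integral_const_mul, intervalIntegral.integral_const_mul]
    · ring
    all_goals
      apply Continuous.intervalIntegrable
      fun_prop
  have h5 := q5_be hq.le
  have h4 := q4_al (q := q)
  refine ⟨fun t => A * (t - t ^ 3) + B / 2 * (t ^ 2 - t ^ 3)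
      + dd q / 6 * (t ^ 3 * R - (t ^ 3 * G0 t - 3 * t ^ 2 * G1 t + 3 * t * G2 t - G3 t)),
    fun t => A * (1 - 3 * t ^ 2) + B / 2 * (2 * t - 3 * t ^ 2)
      + dd q / 2 * (t ^ 2 * R - (t ^ 2 * G0 t - 2 * t * G1 t + G2 t)),
    fun t => A * (-6 * t) + B * (1 - 3 * t) + dd q * (t * R - (t * G0 t - G1 t)),
    fun t => -6 * A - 3 * B + dd q * (R - G0 t), ?_, ?_, ?_, ?_, ?_, ?_, ?_, ?_, ?_⟩
  · intro t
    have i := hasDerivAt_id' t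
    have p2 := hasDerivAt_pow 2 t
    have p3 := hasDerivAt_pow 3 t
    have h := (((i.sub p3).const_mul A).add ((p2.sub p3).const_mul (B / 2))).add
      (((p3.mul_const R).sub ((((p3.mul (d0 t)).sub ((p2.const_mul 3).mul (d1 t))).add
        ((i.const_mul 3).mul (d2 t))).sub (d3 t))).const_mul (dd q / 6))
    refine h.congr_deriv ?_
    push_cast
    simp only [Nat.add_one_sub_one, pow_one]
    ring
  · intro t
    have i := hasDerivAt_id' t
    have p2 := hasDerivAt_pow 2 t
    have c1 := hasDerivAt_const t (1:ℝ)
    have h := (((c1.sub (p2.const_mul 3)).const_mul A).add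
      (((i.const_mul 2).sub (p2.const_mul 3)).const_mul (B / 2))).add
      (((p2.mul_const R).sub (((p2.mul (d0 t)).sub ((i.const_mul 2).mul (d1 t))).add (d2 t))).const_mul (dd q / 2))
    refine h.congr_deriv ?_
    push_cast
    simp only [Nat.add_one_sub_one, pow_one]
    ring
  · intro t
    have i := hasDerivAt_id' t
    have c1 := hasDerivAt_const t (1:ℝ)
    have h := (((i.const_mul (-6)).const_mul A).add
      ((c1.sub (i.const_mul 3)).const_mul B)).add
      (((i.mul_const R).sub ((i.mul (d0 t)).sub (d1 t))).const_mul (dd q))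
    refine h.congr_deriv ?_
    ring
  · intro t
    have h := (((d0 t).const_sub R).const_mul (dd q)).const_add (-6 * A - 3 * B)
    refine h.congr_deriv ?_
    ring
  · intro t ht
    rw [heq t ht]
    simp only
    have hT : ∫ s in (0:ℝ)..t, (t - s) ^ 3 * g s
        = t ^ 3 * G0 t - 3 * t ^ 2 * G1 t + 3 * t * G2 t - G3 t := by
      rw [hcub t (t ^ 3) (-(3 * t ^ 2)) (3 * t) (-1) (fun s => (t - s) ^ 3) (by intro s; ring)]
      ring
    rw [← hT, ← max_int hg ht, ← hAi, ← hBi, ← hRi]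
    have e : ∀ s, KK q t s * g s = (t - t ^ 3) * (ka q s * g s)
      + (t ^ 2 - t ^ 3) / 2 * (kb q s * g s) + dd q / 6 * t ^ 3 * ((1 - s) ^ 3 * g s)
      + -(dd q / 6) * ((max (t - s) 0) ^ 3 * g s) := by
      intro s; unfold KK; ring
    simp_rw [e]
    rw [intervalIntegral.integral_add, intervalIntegral.integral_add, intervalIntegral.integral_add,
      intervalIntegral.integral_const_mul, intervalIntegral.integral_const_mul,
      intervalIntegral.integral_const_mul, intervalIntegral.integral_const_mul]
    · ring
    all_goals
      apply Continuous.intervalIntegrable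
      fun_prop
  · simp only [z0, z1, z2, z3, hR]
    ring
  · simp only [z0, z1, z2, z3]
    have e : -q ^ 5 * (A * (1 - 3 * 0 ^ 2) + B / 2 * (2 * 0 - 3 * 0 ^ 2)
      + dd q / 2 * (0 ^ 2 * R - (0 ^ 2 * 0 - 2 * 0 * 0 + 0))) = -(q ^ 5 * be q / 12 * ((1 - al q) * G1 1 + (3 * al q - 2) * G2 1
    - (2 * al q - 1) * G3 1)) := by rw [hA]; ring
    rw [e, h5, hR, hA, hB]
    unfold dd
    ring
  · simp only [z0, z1, z2, z3]
    have e : -q ^ 4 * (A * (-6 * 0) + B * (1 - 3 * 0) + dd q * (0 * R - (0 * 0 - 0))) = -(q ^ 4 * al q * ((1 / 3 - be q / 2) * G1 1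
    - (1 / 2 - be q / 2) * G2 1 + 1 / 6 * G3 1)) := by rw [hB]; ring
    rw [e, h4, hR, hA, hB]
    unfold dd
    ring
  · simp only [z0]
    linarith

/-- Antiperiodic extension of `f` restricted to `[0, T)`. -/
noncomputable def aext (T : ℝ) (f : ℝ → ℝ) (s : ℝ) : ℝ :=
  (-1 : ℝ) ^ ⌊s / T⌋ * f (s - ⌊s / T⌋ * T)

lemma aext_cell {T : ℝ} (hT : 0 < T) {f : ℝ → ℝ} (hf : f T = - f 0) (n : ℤ) {s : ℝ}
    (hs : s ∈ Icc (n * T) ((n + 1) * T)) :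
    aext T f s = (-1 : ℝ) ^ n * f (s - n * T) := by
  obtain ⟨h1, h2⟩ := hs
  unfold aext
  rcases h2.lt_or_eq with h | h
  · have : ⌊s / T⌋ = n := by
      rw [Int.floor_eq_iff]
      exact ⟨by rwa [le_div_iff₀ hT], by rwa [div_lt_iff₀ hT]⟩
    rw [this]
  · have : ⌊s / T⌋ = n + 1 := by
      rw [h, mul_div_cancel_right₀ _ hT.ne']
      exact_mod_cast Int.floor_intCast (n + 1)
    rw [this, zpow_add_one₀ (by norm_num), h]
    have e1 : (n + 1 : ℝ) * T - ((n + 1 : ℤ) : ℝ) * T = 0 := by push_cast; ring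
    have e2 : (n + 1 : ℝ) * T - n * T = T := by ring
    rw [e1, e2, hf]; ring

lemma aext_within {T : ℝ} (hT : 0 < T) {f f' : ℝ → ℝ} (hd : ∀ s, HasDerivAt f (f' s) s)
    (hf : f T = - f 0) (hf' : f' T = - f' 0) (n : ℤ) {s : ℝ}
    (hs : s ∈ Icc (n * T) ((n + 1) * T)) :
    HasDerivWithinAt (aext T f) (aext T f' s) (Icc (n * T) ((n + 1) * T)) s := by
  rw [aext_cell hT hf' n hs]
  have h1 : HasDerivAt (fun x => (-1 : ℝ) ^ n * f (x - n * T)) ((-1 : ℝ) ^ n * f' (s - n * T)) s :=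
    ((hd (s - n * T)).comp_sub_const s (n * T)).const_mul _
  exact h1.hasDerivWithinAt.congr (fun x hx => aext_cell hT hf n hx) (aext_cell hT hf n hs)

lemma aext_deriv {T : ℝ} (hT : 0 < T) {f f' : ℝ → ℝ} (hd : ∀ s, HasDerivAt f (f' s) s)
    (hf : f T = - f 0) (hf' : f' T = - f' 0) (s : ℝ) :
    HasDerivAt (aext T f) (aext T f' s) s := by
  have h1 : (⌊s / T⌋ : ℝ) * T ≤ s := by
    rw [← le_div_iff₀ hT]; exact Int.floor_le _
  have h2 : s < ((⌊s / T⌋ : ℝ) + 1) * T := by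
    rw [← div_lt_iff₀ hT]; exact Int.lt_floor_add_one _
  have hw := aext_within hT hd hf hf' ⌊s / T⌋ ⟨h1, h2.le⟩
  rcases h1.lt_or_eq with h | h
  · exact hw.hasDerivAt (Icc_mem_nhds h h2)
  · have hw2 := aext_within hT hd hf hf' (⌊s / T⌋ - 1) (s := s)
      ⟨by push_cast; nlinarith, by push_cast; nlinarith⟩
    refine (hw2.union hw).hasDerivAt ?_
    have : Icc (((⌊s / T⌋ - 1 : ℤ) : ℝ) * T) (((⌊s / T⌋ : ℝ) + 1) * T) ∈ nhds s :=
      Icc_mem_nhds (by push_cast; nlinarith) h2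
    filter_upwards [this] with x hx
    rcases le_total x s with hxs | hxs
    · left; exact ⟨hx.1, by push_cast; nlinarith⟩
    · right; exact ⟨by linarith, hx.2⟩

lemma aext_anti {T : ℝ} (hT : 0 < T) (f : ℝ → ℝ) (s : ℝ) :
    aext T f (s + T) = - aext T f s := by
  unfold aext
  have : ⌊(s + T) / T⌋ = ⌊s / T⌋ + 1 := by
    rw [add_div, div_self hT.ne', Int.floor_add_one]
  rw [this, zpow_add_one₀ (by norm_num)]
  have e : s + T - ((⌊s / T⌋ + 1 : ℤ) : ℝ) * T = s - ⌊s / T⌋ * T := by push_cast; ring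
  rw [e]; ring

lemma sign_cube (x : ℝ) : Real.sign (x ^ 3) * |x ^ 3| ^ ((1:ℝ)/3) = x := by
  have h : |x ^ 3| ^ ((1:ℝ)/3) = |x| := by
    rw [abs_pow, ← Real.rpow_natCast, ← Real.rpow_mul (abs_nonneg x)]; norm_num
  rw [h]
  rcases lt_trichotomy x 0 with hx | hx | hx
  · rw [Real.sign_of_neg (by exact Odd.pow_neg (by decide) hx), abs_of_neg hx]; ring
  · simp [hx]
  · rw [Real.sign_of_pos (by positivity), abs_of_pos hx]; ring

lemma cont_of_cube {H : ℝ → ℝ} (h : Continuous fun s => H s ^ 3) : Continuous H := by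
  have e : H = fun s => (max (H s ^ 3) 0) ^ ((1:ℝ)/3) - (max (-(H s ^ 3)) 0) ^ ((1:ℝ)/3) := by
    funext s
    have key : ∀ y : ℝ, 0 ≤ y → (y ^ 3) ^ ((1:ℝ)/3) = y := by
      intro y hy
      rw [← Real.rpow_natCast, ← Real.rpow_mul hy]; norm_num
    rcases le_total 0 (H s) with hx | hx
    · have : 0 ≤ H s ^ 3 := by positivity
      rw [max_eq_left this, max_eq_right (by linarith), key _ hx, Real.zero_rpow (by norm_num)]
      ring
    · have h3 : 0 ≤ (- H s) ^ 3 := pow_nonneg (by linarith) 3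
      have h4 : -(H s ^ 3) = (- H s) ^ 3 := by ring
      rw [h4, max_eq_left h3, max_eq_right (by linarith), key _ (by linarith),
        Real.zero_rpow (by norm_num)]
      ring
  rw [e]
  refine Continuous.sub ?_ ?_
  · exact (h.max continuous_const).rpow_const (fun _ => Or.inr (by norm_num))
  · exact (h.neg.max continuous_const).rpow_const (fun _ => Or.inr (by norm_num))

lemma final_ode {e0 e1 e2 e3 H : ℝ → ℝ}
    (h0 : ∀ s, HasDerivAt e0 (-6 * e0 s + e1 s) s)
    (h1 : ∀ s, HasDerivAt e1 (-5 * e1 s + e2 s) s)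
    (h2 : ∀ s, HasDerivAt e2 (-4 * e2 s + e3 s) s)
    (h3 : ∀ s, HasDerivAt e3 (-3 * e3 s - H s) s)
    (hH : ∀ s, e0 s = H s ^ 3) :
    ContDiff ℝ 4 e0 ∧ (∀ s : ℝ,
        iteratedDeriv 4 e0 s + 18 * iteratedDeriv 3 e0 s + 119 * iteratedDeriv 2 e0 s
            + 342 * deriv e0 s + 360 * e0 s =
          -(Real.sign (e0 s) * |e0 s| ^ ((1:ℝ)/3))) := by
  have c0 : Continuous e0 := continuous_iff_continuousAt.2 fun s => (h0 s).continuousAt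
  have c1 : Continuous e1 := continuous_iff_continuousAt.2 fun s => (h1 s).continuousAt
  have c2 : Continuous e2 := continuous_iff_continuousAt.2 fun s => (h2 s).continuousAt
  have c3 : Continuous e3 := continuous_iff_continuousAt.2 fun s => (h3 s).continuousAt
  have cH : Continuous H := cont_of_cube (by
    have h := funext hH
    rwa [h] at c0)
  have d0 : deriv e0 = fun s => -6 * e0 s + e1 s := funext fun s => (h0 s).deriv
  have k1 : ∀ s, HasDerivAt (fun s => -6 * e0 s + e1 s) (36 * e0 s - 11 * e1 s + e2 s) s := by
    intro s
    refine (((h0 s).const_mul (-6)).add (h1 s)).congr_deriv ?_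
    ring
  have k2 : ∀ s, HasDerivAt (fun s => 36 * e0 s - 11 * e1 s + e2 s)
      (-216 * e0 s + 91 * e1 s - 15 * e2 s + e3 s) s := by
    intro s
    refine ((((h0 s).const_mul 36).sub ((h1 s).const_mul 11)).add (h2 s)).congr_deriv ?_
    ring
  have k3 : ∀ s, HasDerivAt (fun s => -216 * e0 s + 91 * e1 s - 15 * e2 s + e3 s)
      (1296 * e0 s - 671 * e1 s + 151 * e2 s - 18 * e3 s - H s) s := by
    intro s
    refine (((((h0 s).const_mul (-216)).add ((h1 s).const_mul 91)).sub
      ((h2 s).const_mul 15)).add (h3 s)).congr_deriv ?_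
    ring
  have i1 : iteratedDeriv 1 e0 = fun s => -6 * e0 s + e1 s := by rw [iteratedDeriv_one, d0]
  have i2 : iteratedDeriv 2 e0 = fun s => 36 * e0 s - 11 * e1 s + e2 s := by
    rw [iteratedDeriv_succ, i1]; exact funext fun s => (k1 s).deriv
  have i3 : iteratedDeriv 3 e0 = fun s => -216 * e0 s + 91 * e1 s - 15 * e2 s + e3 s := by
    rw [iteratedDeriv_succ, i2]; exact funext fun s => (k2 s).deriv
  have i4 : iteratedDeriv 4 e0 =
      fun s => 1296 * e0 s - 671 * e1 s + 151 * e2 s - 18 * e3 s - H s := by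
    rw [iteratedDeriv_succ, i3]; exact funext fun s => (k3 s).deriv
  constructor
  · have : ContDiff ℝ ((4 : ℕ) : WithTop ℕ∞) e0 := by
      rw [contDiff_nat_iff_iteratedDeriv]
      constructor
      · intro m hm
        interval_cases m
        · rw [iteratedDeriv_zero]; exact c0
        · rw [i1]; fun_prop
        · rw [i2]; fun_prop
        · rw [i3]; fun_prop
        · rw [i4]; fun_prop
      · intro m hm
        interval_cases m
        · rw [iteratedDeriv_zero]; exact fun s => (h0 s).differentiableAt
        · rw [i1]; exact fun s => (k1 s).differentiableAt
        · rw [i2]; exact fun s => (k2 s).differentiableAt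
        · rw [i3]; exact fun s => (k3 s).differentiableAt
    exact_mod_cast this
  · intro s
    rw [hH s, sign_cube, i4, i3, i2, d0, ← hH s]
    ring

lemma theta_deriv {L : ℝ} {U U' : ℝ → ℝ} (hU : ∀ t, HasDerivAt U (U' t) t)
    (c a : ℝ) (s : ℝ) :
    HasDerivAt (fun s => Real.exp (a * s) * (c * U ((Real.exp s - 1) / L)))
      (a * (Real.exp (a * s) * (c * U ((Real.exp s - 1) / L)))
        + Real.exp ((a + 1) * s) * (c / L * U' ((Real.exp s - 1) / L))) s := by
  have hx : HasDerivAt (fun s => (Real.exp s - 1) / L) (Real.exp s / L) s :=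
    ((Real.hasDerivAt_exp s).sub_const 1).div_const L
  have h1 := ((hU ((Real.exp s - 1) / L)).comp s hx).const_mul c
  have he : HasDerivAt (fun s => Real.exp (a * s)) (Real.exp (a * s) * a) s := by
    simpa using ((hasDerivAt_id s).const_mul a).exp
  refine (he.mul h1).congr_deriv ?_
  rw [add_mul, Real.exp_add, one_mul]
  simp only [Function.comp_apply]
  ring

lemma main_exists : ∃ T : ℝ, 0 < T ∧ ∃ t0 t1 t2 t3 h : ℝ → ℝ,
    (∀ s, HasDerivAt t0 (-6 * t0 s + t1 s) s) ∧ (∀ s, HasDerivAt t1 (-5 * t1 s + t2 s) s) ∧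
    (∀ s, HasDerivAt t2 (-4 * t2 s + t3 s) s) ∧ (∀ s, HasDerivAt t3 (-3 * t3 s - h s) s) ∧
    (∀ s ∈ Icc 0 T, t0 s = h s ^ 3) ∧ t0 T = - t0 0 ∧ t1 T = - t1 0 ∧ t2 T = - t2 0 ∧
    t3 T = - t3 0 ∧ ∃ s ∈ Ioo 0 T, 0 < t0 s := by
  obtain ⟨q, hq, hdd, g, hg, hpos, heq, hJ⟩ := shoot
  obtain ⟨U0, U1, U2, U3, d0, d1, d2, d3, hU, b0, b1, b2, b3⟩ := chainU hq hg heq hJ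
  have hL : 0 < q - 1 := by linarith
  set L := q - 1 with hLdef
  have hq0 : 0 < q := by linarith
  set v := Real.sqrt (L ^ 4 / dd q) with hv
  have hv0 : 0 < v := Real.sqrt_pos.2 (by positivity)
  have hv2 : v ^ 2 = L ^ 4 / dd q := Real.sq_sqrt (by positivity)
  have hT : 0 < Real.log q := Real.log_pos hq
  have hexpT : Real.exp (Real.log q) = q := Real.exp_log hq0
  have hxT : (Real.exp (Real.log q) - 1) / L = 1 := by rw [hexpT]; exact div_self hL.ne'
  have hx0 : (Real.exp 0 - 1) / L = 0 := by simp
  have hpow : ∀ k : ℕ, Real.exp (-(k : ℝ) * Real.log q) = (q ^ k)⁻¹ := by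
    intro k
    rw [neg_mul, Real.exp_neg, Real.exp_nat_mul, hexpT]
  have p6 := hpow 6
  have p5 := hpow 5
  have p4 := hpow 4
  have p3 := hpow 3
  push_cast at p6 p5 p4 p3
  refine ⟨Real.log q, hT,
    fun s => Real.exp (-6 * s) * (v ^ 3 * U0 ((Real.exp s - 1) / L)),
    fun s => Real.exp (-5 * s) * (v ^ 3 / L * U1 ((Real.exp s - 1) / L)),
    fun s => Real.exp (-4 * s) * (v ^ 3 / L / L * U2 ((Real.exp s - 1) / L)),
    fun s => Real.exp (-3 * s) * (v ^ 3 / L / L / L * U3 ((Real.exp s - 1) / L)),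
    fun s => Real.exp (-2 * s) * (v * g ((Real.exp s - 1) / L)), ?_, ?_, ?_, ?_, ?_, ?_, ?_, ?_,
    ?_, ?_⟩
  · intro s
    refine (theta_deriv d0 (v ^ 3) (-6) s).congr_deriv ?_
    norm_num
  · intro s
    refine (theta_deriv d1 (v ^ 3 / L) (-5) s).congr_deriv ?_
    norm_num
  · intro s
    refine (theta_deriv d2 (v ^ 3 / L / L) (-4) s).congr_deriv ?_
    norm_num
  · intro s
    refine (theta_deriv d3 (v ^ 3 / L / L / L) (-3) s).congr_deriv ?_
    have e : v ^ 3 / L / L / L / L * dd q = v := by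
      have : v ^ 3 = v * (L ^ 4 / dd q) := by rw [← hv2]; ring
      rw [this]; field_simp
    have e2 : (-3 + 1 : ℝ) = -2 := by norm_num
    rw [e2]
    linear_combination (-Real.exp (-2 * s) * g ((Real.exp s - 1) / L)) * e
  · intro s hs
    have hx : (Real.exp s - 1) / L ∈ Icc (0:ℝ) 1 := by
      have h1 : 1 ≤ Real.exp s := Real.one_le_exp hs.1
      have h2 : Real.exp s ≤ q := by rw [← hexpT]; exact Real.exp_le_exp.2 hs.2
      exact ⟨div_nonneg (by linarith) hL.le, by rw [div_le_one hL]; linarith⟩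
    have e : Real.exp (-6 * s) = Real.exp (-2 * s) ^ 3 := by
      rw [← Real.exp_nat_mul]; congr 1; push_cast; ring
    simp only
    rw [hU _ hx, e]; ring
  · simp only
    rw [hxT, hx0, p6, b0]; simp; field_simp
  · simp only
    rw [hxT, hx0, p5, b1]; simp; field_simp
  · simp only
    rw [hxT, hx0, p4, b2]; simp; field_simp
  · simp only
    rw [hxT, hx0, p3, b3]; simp; field_simp
  · refine ⟨Real.log (1 + L / 2), ⟨Real.log_pos (by linarith),
      Real.log_lt_log (by linarith) (by linarith)⟩, ?_⟩
    have hx : (Real.exp (Real.log (1 + L / 2)) - 1) / L = 1 / 2 := by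
      rw [Real.exp_log (by linarith)]; field_simp; ring
    simp only
    rw [hx, hU _ ⟨by norm_num, by norm_num⟩]
    have := hpos (1 / 2) ⟨by norm_num, by norm_num⟩
    positivity

/-- existence of a nonconstant periodic C⁴ solution of the
oscillatory-component equation
`φ⁗ + 18φ‴ + 119φ″ + 342φ′ + 360φ = −sign(φ)|φ|^{1/3}` governing compacton
profiles of the cubic fifth-order NDE near their interfaces. -/
theorem stmt19 :
    ∃ φ : ℝ → ℝ, ∃ T > (0:ℝ),
      ContDiff ℝ 4 φ ∧
      Function.Periodic φ T ∧
      (∃ s₁ s₂ : ℝ, φ s₁ ≠ φ s₂) ∧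
      (∀ s : ℝ,
        iteratedDeriv 4 φ s + 18 * iteratedDeriv 3 φ s + 119 * iteratedDeriv 2 φ s
            + 342 * deriv φ s + 360 * φ s =
          -(Real.sign (φ s) * |φ s| ^ ((1:ℝ)/3))) := by
  obtain ⟨T, hT, t0, t1, t2, t3, h, d0, d1, d2, d3, hc, b0, b1, b2, b3, s0, hs0, hp⟩ := main_exists
  have bh : h T = - h 0 := by
    have h1 := hc T ⟨hT.le, le_rfl⟩
    have h2 := hc 0 ⟨le_rfl, hT.le⟩
    have h3 : h T ^ 3 = (- h 0) ^ 3 := by rw [← h1, b0, h2]; ring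
    exact (Odd.strictMono_pow (R := ℝ) (n := 3) (by decide)).injective h3
  have E := final_ode (e0 := aext T t0) (e1 := aext T t1) (e2 := aext T t2) (e3 := aext T t3)
    (H := aext T h)
    (fun s => (aext_deriv hT d0 b0 (by linarith) s).congr_deriv (by unfold aext; ring))
    (fun s => (aext_deriv hT d1 b1 (by linarith) s).congr_deriv (by unfold aext; ring))
    (fun s => (aext_deriv hT d2 b2 (by linarith) s).congr_deriv (by unfold aext; ring))
    (fun s => (aext_deriv hT d3 b3 (by linarith) s).congr_deriv (by unfold aext; ring))
    (fun s => by
      unfold aext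
      have h1 : (⌊s / T⌋ : ℝ) * T ≤ s := by
        rw [← le_div_iff₀ hT]; exact Int.floor_le _
      have h2 : s < ((⌊s / T⌋ : ℝ) + 1) * T := by
        rw [← div_lt_iff₀ hT]; exact Int.lt_floor_add_one _
      rw [hc _ ⟨by linarith, by linarith⟩, mul_pow]
      congr 1
      rcases Int.even_or_odd ⌊s / T⌋ with h | h
      · rw [h.neg_one_zpow]; norm_num
      · rw [h.neg_one_zpow]; norm_num)
  refine ⟨aext T t0, T + T, by linarith, E.1, ?_, ⟨s0 + T, s0, ?_⟩, E.2⟩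
  · intro s
    rw [← add_assoc, aext_anti hT, aext_anti hT, neg_neg]
  · rw [aext_anti hT]
    have : aext T t0 s0 = t0 s0 := by
      have := aext_cell hT b0 0 (s := s0) ⟨by simpa using hs0.1.le, by simpa using hs0.2.le⟩
      simpa using this
    rw [this]
    linarith
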